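/- arXiv:1011.0791 — 8 statements merged into one kernel-verified Lean document; each statement's English description precedes it below -/
import Mathlib

section
/- Let m₀, b₀, k₀, N, λ > 0. Every complex root s of the quadratic m₀·s² + (b₀·λ/N²)·s + (k₀·λ/N²) = 0 satisfies Re(s) ≤ −min( λ·b₀/(2·m₀·N²), k₀/b₀ ). -/
open Real

theorem le_neg_div_of_quadratic_eq_zero {K : Type*} [Field K] [LinearOrder K]
    [IsStrictOrderedRing K] {a b c x : K} (ha : 0 ≤ a) (hb : 0 < b)
    (hx : a * x ^ 2 + b * x + c = 0) : x ≤ -(c / b) := by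
  have h_linear : b * x + c ≤ 0 := by linarith [mul_nonneg ha (sq_nonneg x)]
  rw [← neg_div, le_div_iff₀ hb]
  linarith

theorem re_eq_neg_div_of_quadratic_eq_zero_of_im_ne_zero {a b c : ℝ} {s : ℂ} (ha : a ≠ 0)
    (hs : (a : ℂ) * s ^ 2 + b * s + c = 0) (him : s.im ≠ 0) : s.re = -(b / (2 * a)) := by
  have h_im_part : s.im * (2 * a * s.re + b) = 0 := by
    have h := congrArg Complex.im hs
    simp only [pow_two, Complex.add_im, Complex.mul_re, Complex.mul_im, Complex.ofReal_re,
      Complex.ofReal_im, Complex.zero_im] at h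
    linarith
  have h_vertex : 2 * a * s.re + b = 0 := (mul_eq_zero.mp h_im_part).resolve_left him
  rw [← neg_div, eq_div_iff (mul_ne_zero two_ne_zero ha)]
  linarith

theorem re_le_neg_min_of_quadratic_eq_zero {a b c : ℝ} {s : ℂ} (ha : 0 < a) (hb : 0 < b)
    (hs : (a : ℂ) * s ^ 2 + b * s + c = 0) : s.re ≤ -min (b / (2 * a)) (c / b) := by
  by_cases him : s.im = 0
  · lift s to ℝ using him
    have h_real_root : s ≤ -(c / b) :=
      le_neg_div_of_quadratic_eq_zero ha.le hb (by exact_mod_cast hs)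
    exact h_real_root.trans (neg_le_neg (min_le_right _ _))
  · rw [re_eq_neg_div_of_quadratic_eq_zero_of_im_ne_zero ha.ne' hs him]
    exact neg_le_neg (min_le_left _ _)

theorem stmt_4_general {m₀ b₀ k₀ N lam : ℝ} (hm : 0 < m₀) (hb : 0 < b₀) (hN : N ≠ 0)
    (hlam : 0 < lam) {s : ℂ}
    (hs : (m₀ : ℂ) * s ^ 2 + ((b₀ * lam / N ^ 2 : ℝ) : ℂ) * s
        + ((k₀ * lam / N ^ 2 : ℝ) : ℂ) = 0) :
    s.re ≤ -min (lam * b₀ / (2 * m₀ * N ^ 2)) (k₀ / b₀) := by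
  have h_damping : b₀ * lam / N ^ 2 / (2 * m₀) = lam * b₀ / (2 * m₀ * N ^ 2) := by
    field_simp
  have h_ratio : k₀ * lam / N ^ 2 / (b₀ * lam / N ^ 2) = k₀ / b₀ := by
    field_simp
  rw [← h_damping, ← h_ratio]
  exact re_le_neg_min_of_quadratic_eq_zero hm (by positivity) hs

/-- Every complex root of `m₀s² + (b₀λ/N²)s + (k₀λ/N²) = 0` (with positive parameters)
satisfies `Re(s) ≤ -min(λb₀/(2m₀N²), k₀/b₀)`. -/
theorem stmt_4 (m₀ b₀ k₀ N lam : ℝ)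
    (hm : 0 < m₀) (hb : 0 < b₀) (hk : 0 < k₀) (hN : 0 < N) (hlam : 0 < lam)
    (s : ℂ)
    (hs : (m₀ : ℂ) * s ^ 2 + ((b₀ * lam / N ^ 2 : ℝ) : ℂ) * s
        + ((k₀ * lam / N ^ 2 : ℝ) : ℂ) = 0) :
    s.re ≤ -min (lam * b₀ / (2 * m₀ * N ^ 2)) (k₀ / b₀) :=
  stmt_4_general hm hb hN.ne' hlam hs
end

section
/- Let m₀, b₀, k₀, N > 0 and let λ be a real number for which there exists a nonzero twice continuously differentiable function φ : [0,1] → ℝ with φ''(x) + λ·φ(x) = 0 on [0,1], φ'(0) = 0 and φ(1) = 0. Then every complex root s of m₀·s² + (b₀·λ/N²)·s + (k₀·λ/N²) = 0 satisfies Re(s) ≤ −min( π²·b₀/(8·m₀·N²), k₀/b₀ ). Moreover, if λ = π²/4 and N > π·b₀/(4·√(m₀·k₀)), then every such root satisfies Re(s) = −π²·b₀/(8·m₀·N²). -/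
open Real Set

/-!
If `T` satisfies the strict Riccati inequality `T' > q + T²`, then for every solution of
`φ'' = -qφ` the quantity `φφ' + Tφ²` has derivative `(φ' + Tφ)² + (T' - q - T²)φ²`, hence is
nondecreasing, and strictly so where `φ ≠ 0`. For `q = λ` and `T(x) = μ tan(μx)` with
`λ < μ² < π²/4` it vanishes at both ends under the Neumann and Dirichlet conditions, so `φ = 0`;
thus every eigenvalue is at least `π²/4`.

A complex root of a real quadratic `ms² + βs + γ` either has real part `-β/(2m)` or has a real part
which is itself a root; in the latter case `β Re s + γ = -m (Re s)² ≤ 0`. With `β = b₀λ/N²` and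
`γ = k₀λ/N²` the ratio `γ/β = k₀/b₀` does not depend on `λ`.
-/

section SturmComparison

variable {a b : ℝ}

lemma hasDerivWithinAt_eq_zero_of_nonneg_of_le {f f' : ℝ → ℝ} (hab : a < b)
    (hf : ∀ x ∈ Icc a b, HasDerivWithinAt f (f' x) (Icc a b) x)
    (hf' : ∀ x ∈ Icc a b, 0 ≤ f' x) (hle : f b ≤ f a) : ∀ x ∈ Icc a b, f' x = 0 := by
  have hmono : MonotoneOn f (Icc a b) :=
    monotoneOn_of_hasDerivWithinAt_nonneg (convex_Icc a b)
      (fun x hx => (hf x hx).continuousWithinAt)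
      (fun x hx => (hf x (interior_subset hx)).mono interior_subset)
      (fun x hx => hf' x (interior_subset hx))
  have hconst : ∀ x ∈ Icc a b, f x = f a := fun x hx =>
    le_antisymm ((hmono hx (right_mem_Icc.2 hab.le) hx.2).trans hle)
      (hmono (left_mem_Icc.2 hab.le) hx hx.1)
  intro x hx
  exact (uniqueDiffOn_Icc hab x hx).eq_deriv _ (hf x hx)
    ((hasDerivWithinAt_const x (Icc a b) (f a)).congr hconst (hconst x hx))

lemma hasDerivWithinAt_mul_add_riccati_mul_sq {φ φ' T : ℝ → ℝ} {q T' x : ℝ} {s : Set ℝ}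
    (hφ : HasDerivWithinAt φ (φ' x) s x) (hφ' : HasDerivWithinAt φ' (-(q * φ x)) s x)
    (hT : HasDerivWithinAt T T' s x) :
    HasDerivWithinAt (fun y => φ y * φ' y + T y * φ y ^ 2)
      ((φ' x + T x * φ x) ^ 2 + (T' - (q + T x ^ 2)) * φ x ^ 2) s x :=
  ((hφ.fun_mul hφ').fun_add (hT.fun_mul (hφ.fun_pow 2))).congr_deriv (by push_cast; ring)

variable {φ φ' q : ℝ → ℝ}

lemma eqOn_zero_of_riccati_lt {T T' : ℝ → ℝ} (hab : a < b)
    (hφ : ∀ x ∈ Icc a b, HasDerivWithinAt φ (φ' x) (Icc a b) x)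
    (hφ' : ∀ x ∈ Icc a b, HasDerivWithinAt φ' (-(q x * φ x)) (Icc a b) x)
    (hT : ∀ x ∈ Icc a b, HasDerivWithinAt T (T' x) (Icc a b) x)
    (hriccati : ∀ x ∈ Icc a b, q x + T x ^ 2 < T' x)
    (hle : φ b * φ' b + T b * φ b ^ 2 ≤ φ a * φ' a + T a * φ a ^ 2) :
    EqOn φ 0 (Icc a b) := by
  have hgap : ∀ x ∈ Icc a b, 0 < T' x - (q x + T x ^ 2) := fun x hx =>
    sub_pos.2 (hriccati x hx)
  have hgap_mul : ∀ x ∈ Icc a b, 0 ≤ (T' x - (q x + T x ^ 2)) * φ x ^ 2 := fun x hx =>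
    mul_nonneg (hgap x hx).le (sq_nonneg _)
  have hderiv_zero := hasDerivWithinAt_eq_zero_of_nonneg_of_le hab
    (fun x hx => hasDerivWithinAt_mul_add_riccati_mul_sq (hφ x hx) (hφ' x hx) (hT x hx))
    (fun x hx => add_nonneg (sq_nonneg _) (hgap_mul x hx)) hle
  intro x hx
  have hmul : (T' x - (q x + T x ^ 2)) * φ x ^ 2 = 0 :=
    ((add_eq_zero_iff_of_nonneg (sq_nonneg _) (hgap_mul x hx)).1 (hderiv_zero x hx)).2
  exact sq_eq_zero_iff.1 ((mul_eq_zero.1 hmul).resolve_left (hgap x hx).ne')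

lemma hasDerivAt_mul_tan_mul_sub {μ x : ℝ} (hcos : cos (μ * (x - a)) ≠ 0) :
    HasDerivAt (fun y => μ * tan (μ * (y - a))) (μ ^ 2 + (μ * tan (μ * (x - a))) ^ 2) x := by
  have hinner : HasDerivAt (fun y => μ * (y - a)) μ x := by
    simpa using ((hasDerivAt_id x).sub_const a).const_mul μ
  refine (((hasDerivAt_tan hcos).comp x hinner).const_mul μ).congr_deriv ?_
  rw [one_div, ← inv_one_add_tan_sq hcos, inv_inv]
  ring

lemma eqOn_zero_of_lt_sq {μ : ℝ} (hab : a < b) (hμ : 0 ≤ μ) (hμ_lt : μ * (b - a) < π / 2)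
    (hq : ∀ x ∈ Icc a b, q x < μ ^ 2)
    (hφ : ∀ x ∈ Icc a b, HasDerivWithinAt φ (φ' x) (Icc a b) x)
    (hφ' : ∀ x ∈ Icc a b, HasDerivWithinAt φ' (-(q x * φ x)) (Icc a b) x)
    (hneumann : φ' a = 0) (hdirichlet : φ b = 0) : EqOn φ 0 (Icc a b) := by
  have hcos : ∀ x ∈ Icc a b, cos (μ * (x - a)) ≠ 0 := by
    intro x hx
    have hlower : 0 ≤ μ * (x - a) := mul_nonneg hμ (sub_nonneg.2 hx.1)
    have hupper : μ * (x - a) ≤ μ * (b - a) := by gcongr; exact hx.2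
    exact (cos_pos_of_mem_Ioo ⟨by linarith [pi_pos], by linarith⟩).ne'
  refine eqOn_zero_of_riccati_lt hab hφ hφ'
    (fun x hx => (hasDerivAt_mul_tan_mul_sub (hcos x hx)).hasDerivWithinAt)
    (fun x hx => by gcongr; exact hq x hx) ?_
  simp [hneumann, hdirichlet]

lemma sq_pi_div_le_of_neumann_dirichlet {lam : ℝ} (hab : a < b)
    (hφ : ∀ x ∈ Icc a b, HasDerivWithinAt φ (φ' x) (Icc a b) x)
    (hφ' : ∀ x ∈ Icc a b, HasDerivWithinAt φ' (-(lam * φ x)) (Icc a b) x)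
    (hneumann : φ' a = 0) (hdirichlet : φ b = 0) (hne : ∃ x ∈ Icc a b, φ x ≠ 0) :
    (π / (2 * (b - a))) ^ 2 ≤ lam := by
  have hlen : 0 < b - a := sub_pos.2 hab
  by_contra! hlam
  obtain ⟨μ, hμ, hμ_lt⟩ : ∃ μ, √lam < μ ∧ μ < π / (2 * (b - a)) :=
    exists_between ((sqrt_lt' (by positivity)).2 hlam)
  have hμ_pos : 0 < μ := (sqrt_nonneg lam).trans_lt hμ
  have hμ_len : μ * (b - a) < π / 2 := by
    rwa [← lt_div_iff₀ hlen, div_div]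
  obtain ⟨x, hx, hφx⟩ := hne
  exact hφx (eqOn_zero_of_lt_sq hab hμ_pos.le hμ_len (fun _ _ => (sqrt_lt' hμ_pos).1 hμ)
    hφ hφ' hneumann hdirichlet hx)

end SturmComparison

section RealQuadratic

variable {m β γ : ℝ} {s : ℂ}

lemma re_eq_or_quadratic_re_eq_zero (hm : m ≠ 0)
    (hs : (m : ℂ) * s ^ 2 + (β : ℂ) * s + (γ : ℂ) = 0) :
    s.re = -(β / (2 * m)) ∨ m * s.re ^ 2 + β * s.re + γ = 0 := by
  have hre : m * (s.re ^ 2 - s.im ^ 2) + β * s.re + γ = 0 := by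
    simpa [pow_two] using congrArg Complex.re hs
  have him : s.im * (2 * m * s.re + β) = 0 := by
    have him_expanded : m * (s.re * s.im + s.im * s.re) + β * s.im = 0 := by
      simpa [pow_two] using congrArg Complex.im hs
    linear_combination him_expanded
  rcases mul_eq_zero.1 him with him_zero | hvertex
  · right
    simpa [him_zero] using hre
  · left
    field_simp
    linear_combination hvertex

lemma re_eq_of_discrim_neg (hdiscrim : discrim m β γ < 0)
    (hs : (m : ℂ) * s ^ 2 + (β : ℂ) * s + (γ : ℂ) = 0) : s.re = -(β / (2 * m)) := by
  have hm : m ≠ 0 := by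
    rintro rfl
    exact hdiscrim.not_ge (by simp [discrim, sq_nonneg])
  refine (re_eq_or_quadratic_re_eq_zero hm hs).resolve_right fun hroot => ?_
  rw [pow_two] at hroot
  exact hdiscrim.not_ge (discrim_eq_sq_of_quadratic_eq_zero hroot ▸ sq_nonneg _)

lemma re_le_neg_min_of_quadratic (hm : 0 < m) (hβ : 0 < β)
    (hs : (m : ℂ) * s ^ 2 + (β : ℂ) * s + (γ : ℂ) = 0) :
    s.re ≤ -min (β / (2 * m)) (γ / β) := by
  rcases re_eq_or_quadratic_re_eq_zero hm.ne' hs with hvertex | hroot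
  · exact hvertex.trans_le (neg_le_neg (min_le_left _ _))
  · have hlin : β * s.re + γ ≤ 0 := by linarith [mul_nonneg hm.le (sq_nonneg s.re)]
    have hre : s.re ≤ -(γ / β) := by
      rw [← neg_div, le_div_iff₀ hβ]
      linarith
    exact hre.trans (neg_le_neg (min_le_right _ _))

end RealQuadratic

lemma sq_lt_mul_sq_of_div_sqrt_lt {x p N : ℝ} (hx : 0 ≤ x) (hp : 0 < p) (h : x / √p < N) :
    x ^ 2 < p * N ^ 2 := by
  have hlt : x < N * √p := (div_lt_iff₀ (sqrt_pos.2 hp)).1 h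
  calc x ^ 2 < (N * √p) ^ 2 := pow_lt_pow_left₀ hlt hx two_ne_zero
    _ = p * N ^ 2 := by rw [mul_pow, sq_sqrt hp.le, mul_comm]

lemma discrim_mul_div_sq_neg {m b k N lam : ℝ} (hN : N ≠ 0) (hlam : 0 < lam)
    (h : b ^ 2 * lam < 4 * (m * k) * N ^ 2) :
    discrim m (b * lam / N ^ 2) (k * lam / N ^ 2) < 0 := by
  have hfactor : discrim m (b * lam / N ^ 2) (k * lam / N ^ 2) =
      lam / N ^ 4 * (b ^ 2 * lam - 4 * (m * k) * N ^ 2) := by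
    rw [discrim]
    field_simp
  rw [hfactor]
  exact mul_neg_of_pos_of_neg (by positivity) (sub_neg.2 h)

/-- If `λ` is an eigenvalue of the boundary value problem `φ'' + λφ = 0`, `φ'(0) = 0`,
`φ(1) = 0`, then every complex root `s` of `m₀s² + (b₀λ/N²)s + (k₀λ/N²) = 0` satisfies
`Re(s) ≤ -min(π²b₀/(8m₀N²), k₀/b₀)`; moreover, if `λ = π²/4` and
`N > πb₀/(4√(m₀k₀))` then `Re(s) = -π²b₀/(8m₀N²)`. -/
theorem stmt_5 (m₀ b₀ k₀ N lam : ℝ)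
    (hm : 0 < m₀) (hb : 0 < b₀) (hk : 0 < k₀) (hN : 0 < N)
    (hex : ∃ φ φ' φ'' : ℝ → ℝ,
      (∀ x ∈ Icc (0:ℝ) 1, HasDerivWithinAt φ (φ' x) (Icc (0:ℝ) 1) x) ∧
      (∀ x ∈ Icc (0:ℝ) 1, HasDerivWithinAt φ' (φ'' x) (Icc (0:ℝ) 1) x) ∧
      ContinuousOn φ'' (Icc (0:ℝ) 1) ∧
      (∃ x ∈ Icc (0:ℝ) 1, φ x ≠ 0) ∧
      (∀ x ∈ Icc (0:ℝ) 1, φ'' x + lam * φ x = 0) ∧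
      φ' 0 = 0 ∧ φ 1 = 0) :
    (∀ s : ℂ, (m₀ : ℂ) * s ^ 2 + ((b₀ * lam / N ^ 2 : ℝ) : ℂ) * s
        + ((k₀ * lam / N ^ 2 : ℝ) : ℂ) = 0 →
      s.re ≤ -min (π ^ 2 * b₀ / (8 * m₀ * N ^ 2)) (k₀ / b₀)) ∧
    (lam = π ^ 2 / 4 → N > π * b₀ / (4 * Real.sqrt (m₀ * k₀)) →
      ∀ s : ℂ, (m₀ : ℂ) * s ^ 2 + ((b₀ * lam / N ^ 2 : ℝ) : ℂ) * s
          + ((k₀ * lam / N ^ 2 : ℝ) : ℂ) = 0 →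
        s.re = -(π ^ 2 * b₀) / (8 * m₀ * N ^ 2)) := by
  obtain ⟨φ, φ', φ'', hφ, hφ', -, hne, hode, hneumann, hdirichlet⟩ := hex
  have hlam : π ^ 2 / 4 ≤ lam := by
    have hbound := sq_pi_div_le_of_neumann_dirichlet zero_lt_one hφ
      (fun x hx => eq_neg_of_add_eq_zero_left (hode x hx) ▸ hφ' x hx) hneumann hdirichlet hne
    linarith
  have hlam_pos : 0 < lam := lt_of_lt_of_le (by positivity) hlam
  constructor
  · intro s hs
    have hdamping : π ^ 2 * b₀ / (8 * m₀ * N ^ 2) ≤ b₀ * lam / N ^ 2 / (2 * m₀) := by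
      calc π ^ 2 * b₀ / (8 * m₀ * N ^ 2) = b₀ * (π ^ 2 / 4) / N ^ 2 / (2 * m₀) := by
            field_simp; norm_num
        _ ≤ b₀ * lam / N ^ 2 / (2 * m₀) := by gcongr
    have hratio : k₀ * lam / N ^ 2 / (b₀ * lam / N ^ 2) = k₀ / b₀ := by field_simp
    refine (re_le_neg_min_of_quadratic hm (by positivity) hs).trans (neg_le_neg ?_)
    exact min_le_min hdamping hratio.ge
  · rintro rfl hN_gt s hs
    have hsq : (π * b₀ / 4) ^ 2 < m₀ * k₀ * N ^ 2 :=
      sq_lt_mul_sq_of_div_sqrt_lt (by positivity) (by positivity) (by rwa [div_div])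
    rw [re_eq_of_discrim_neg (discrim_mul_div_sq_neg hN.ne' hlam_pos (by linarith)) hs]
    field_simp
    norm_num
end

section
/- Let φ : [0,1] → ℝ be continuously differentiable with φ(1) = 0. Then ∫₀¹ φ'(x)² dx ≥ (π²/4)·∫₀¹ φ(x)² dx. -/
open Real Set

/-!
If `w` satisfies the Riccati inequality `w' ≥ q + w ^ 2`, then
`(w ‖u‖ ^ 2)' + ‖u'‖ ^ 2 ≥ q ‖u‖ ^ 2 + ‖u' + w u‖ ^ 2 ≥ q ‖u‖ ^ 2`, and integrating bounds
`∫ q ‖u‖ ^ 2` by `∫ ‖u'‖ ^ 2` up to boundary terms. The function `w x = c * tan (c * (x - a))`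
solves the Riccati equation with `q = c ^ 2` and vanishes at `a`, where `u` is free. It is finite
on `[a, b]` as long as `c * (b - a) < π / 2`, so the optimal constant is reached in the limit.
-/

open Filter MeasureTheory intervalIntegral
open scoped Topology RealInnerProductSpace

theorem hasDerivAt_const_mul_tan_const_mul_sub {a c x : ℝ} (hx : cos (c * (x - a)) ≠ 0) :
    HasDerivAt (fun y ↦ c * tan (c * (y - a))) (c ^ 2 + (c * tan (c * (x - a))) ^ 2) x := by
  have inner : HasDerivAt (fun y ↦ c * (y - a)) c x := by
    simpa using ((hasDerivAt_id x).sub_const a).const_mul c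
  refine (((hasDerivAt_tan hx).comp x inner).const_mul c).congr_deriv ?_
  rw [one_div, ← inv_one_add_tan_sq hx, inv_inv]
  ring

section

variable {E : Type*} [NormedAddCommGroup E] [InnerProductSpace ℝ E]

theorem mul_norm_sq_sub_norm_sq_le_of_add_sq_le {q r s : ℝ} (h : q + r ^ 2 ≤ s) (u v : E) :
    q * ‖u‖ ^ 2 - ‖v‖ ^ 2 ≤ s * ‖u‖ ^ 2 + r * (2 * ⟪u, v⟫) := by
  have expand : ‖v + r • u‖ ^ 2 = ‖v‖ ^ 2 + 2 * r * ⟪u, v⟫ + r ^ 2 * ‖u‖ ^ 2 := by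
    rw [norm_add_sq_real, real_inner_smul_right, real_inner_comm, norm_smul, mul_pow,
      norm_eq_abs, sq_abs]
    ring
  have riccati : (q + r ^ 2) * ‖u‖ ^ 2 ≤ s * ‖u‖ ^ 2 := by gcongr
  linarith [sq_nonneg ‖v + r • u‖]

variable {a b : ℝ} {u u' : ℝ → E}

theorem integral_mul_norm_sq_le_of_riccati {q w w' : ℝ → ℝ} (hab : a ≤ b)
    (hw : ContinuousOn w (Icc a b)) (hu : ContinuousOn u (Icc a b))
    (hw' : ∀ x ∈ Ioo a b, HasDerivWithinAt w (w' x) (Ioi x) x)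
    (hu' : ∀ x ∈ Ioo a b, HasDerivWithinAt u (u' x) (Ioi x) x)
    (riccati : ∀ x ∈ Ioo a b, q x + w x ^ 2 ≤ w' x)
    (hqu : IntervalIntegrable (fun x ↦ q x * ‖u x‖ ^ 2) volume a b)
    (hu'_sq : IntervalIntegrable (fun x ↦ ‖u' x‖ ^ 2) volume a b) :
    ∫ x in a..b, q x * ‖u x‖ ^ 2 ≤
      (∫ x in a..b, ‖u' x‖ ^ 2) + (w b * ‖u b‖ ^ 2 - w a * ‖u a‖ ^ 2) := by
  have bound : ∫ x in a..b, (q x * ‖u x‖ ^ 2 - ‖u' x‖ ^ 2) ≤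
      w b * ‖u b‖ ^ 2 - w a * ‖u a‖ ^ 2 :=
    integral_le_sub_of_hasDeriv_right_of_le hab (hw.mul (hu.norm.pow 2))
      (fun x hx ↦ (hw' x hx).mul (hu' x hx).norm_sq)
      ((intervalIntegrable_iff_integrableOn_Icc_of_le hab).1 (hqu.sub hu'_sq))
      (fun x hx ↦ mul_norm_sq_sub_norm_sq_le_of_add_sq_le (riccati x hx) (u x) (u' x))
  rw [integral_sub hqu hu'_sq] at bound
  linarith

theorem sq_mul_integral_norm_sq_le_of_mul_sub_lt_pi_div_two {c : ℝ} (hab : a ≤ b) (hc : 0 ≤ c)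
    (hcab : c * (b - a) < π / 2) (hu : ContinuousOn u (Icc a b))
    (hu' : ∀ x ∈ Ioo a b, HasDerivWithinAt u (u' x) (Ioi x) x)
    (hu'_sq : IntervalIntegrable (fun x ↦ ‖u' x‖ ^ 2) volume a b) (hub : u b = 0) :
    c ^ 2 * ∫ x in a..b, ‖u x‖ ^ 2 ≤ ∫ x in a..b, ‖u' x‖ ^ 2 := by
  have cos_ne_zero : ∀ x ∈ Icc a b, cos (c * (x - a)) ≠ 0 := fun x hx ↦ by
    have nonneg : 0 ≤ c * (x - a) := mul_nonneg hc (sub_nonneg.2 hx.1)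
    have le : c * (x - a) ≤ c * (b - a) := by gcongr; exact hx.2
    exact (cos_pos_of_mem_Ioo ⟨by linarith [pi_pos], by linarith⟩).ne'
  have hasDerivAt_w : ∀ x ∈ Icc a b, HasDerivAt (fun y ↦ c * tan (c * (y - a)))
      (c ^ 2 + (c * tan (c * (x - a))) ^ 2) x :=
    fun x hx ↦ hasDerivAt_const_mul_tan_const_mul_sub (cos_ne_zero x hx)
  have integrable : IntervalIntegrable (fun x ↦ c ^ 2 * ‖u x‖ ^ 2) volume a b :=
    (continuousOn_const.mul (hu.norm.pow 2)).intervalIntegrable_of_Icc hab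
  have bound := integral_mul_norm_sq_le_of_riccati hab
    (fun x hx ↦ (hasDerivAt_w x hx).continuousAt.continuousWithinAt) hu
    (fun x hx ↦ (hasDerivAt_w x (Ioo_subset_Icc_self hx)).hasDerivWithinAt) hu'
    (fun _ _ ↦ le_rfl) integrable hu'_sq
  simpa [hub] using bound

theorem stmt_7_general (hab : a < b) (hu : ContinuousOn u (Icc a b))
    (hu' : ∀ x ∈ Ioo a b, HasDerivWithinAt u (u' x) (Ioi x) x)
    (hu'_sq : IntervalIntegrable (fun x ↦ ‖u' x‖ ^ 2) volume a b) (hub : u b = 0) :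
    (π / (2 * (b - a))) ^ 2 * ∫ x in a..b, ‖u x‖ ^ 2 ≤ ∫ x in a..b, ‖u' x‖ ^ 2 := by
  have length_pos : 0 < b - a := sub_pos.2 hab
  have tendsto : Tendsto (fun c : ℝ ↦ c ^ 2 * ∫ x in a..b, ‖u x‖ ^ 2)
      (𝓝[<] (π / (2 * (b - a)))) (𝓝 ((π / (2 * (b - a))) ^ 2 * ∫ x in a..b, ‖u x‖ ^ 2)) :=
    ((continuous_id.pow 2).mul continuous_const).continuousWithinAt
  refine le_of_tendsto tendsto ?_
  filter_upwards [Ioo_mem_nhdsLT (show 0 < π / (2 * (b - a)) by positivity)] with c hc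
  have below_pole : c * (b - a) < π / 2 := by
    rw [← lt_div_iff₀ length_pos, div_div]
    exact hc.2
  exact sq_mul_integral_norm_sq_le_of_mul_sub_lt_pi_div_two hab.le hc.1.le below_pole
    hu hu' hu'_sq hub

end

/-- Poincaré–Wirtinger type inequality: for continuously differentiable `φ` on `[0,1]`
with `φ(1) = 0`, `∫₀¹ φ'² ≥ (π²/4) ∫₀¹ φ²`. -/
theorem stmt_7 (φ φ' : ℝ → ℝ)
    (hd : ∀ x ∈ Icc (0:ℝ) 1, HasDerivWithinAt φ (φ' x) (Icc (0:ℝ) 1) x)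
    (hc : ContinuousOn φ' (Icc (0:ℝ) 1))
    (h1 : φ 1 = 0) :
    (∫ x in (0:ℝ)..1, φ' x ^ 2) ≥ (π ^ 2 / 4) * ∫ x in (0:ℝ)..1, φ x ^ 2 := by
  have bound := stmt_7_general zero_lt_one (fun x hx ↦ (hd x hx).continuousWithinAt)
    (fun x hx ↦ ((hd x (Ioo_subset_Icc_self hx)).hasDerivAt
      (Icc_mem_nhds hx.1 hx.2)).hasDerivWithinAt)
    ((hc.norm.pow 2).intervalIntegrable_of_Icc zero_le_one) h1
  have constant_eq : (π / (2 * (1 - 0))) ^ 2 = π ^ 2 / 4 := by ring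
  simpa only [constant_eq, norm_eq_abs, sq_abs] using bound
end

section
/- Let m, b : [0,1] → ℝ be continuous with 0 < m_min ≤ m(x) ≤ m_max and 0 < b_min ≤ b(x) ≤ b_max for all x ∈ [0,1]. If λ ∈ ℝ is such that there exists a nonzero twice continuously differentiable φ : [0,1] → ℝ with φ''(x) + λ·(m(x)/b(x))·φ(x) = 0 on [0,1], φ'(0) = 0 and φ(1) = 0, then λ ≥ π²·b_min/(4·m_max). -/
open Real Set

/-!
Picone's argument: if `φ'' + q φ = 0` and `w` solves the Riccati equation `w' = C + w²`, then
`(φ φ' + w φ²)' = (φ' + w φ)² + (C - q) φ²`. For `C = c²` the function `w = c tan (c (x - α))` is a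
solution which vanishes at `α` and stays finite up to `β` as long as `c (β - α) < π / 2`. The
conditions `φ' α = 0` and `φ β = 0` make `φ φ' + w φ²` vanish at both ends, so `q < c²` forces
`φ = 0`. A small eigenvalue would make `q = λ m / b` fall below such a `c²`.
-/

theorem hasDerivWithinAt_picone {𝕜 : Type*} [NontriviallyNormedField 𝕜] {φ φ' w : 𝕜 → 𝕜}
    {s : Set 𝕜} {x q C : 𝕜} (hφ : HasDerivWithinAt φ (φ' x) s x)
    (hφ' : HasDerivWithinAt φ' (-(q * φ x)) s x) (hw : HasDerivWithinAt w (C + w x ^ 2) s x) :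
    HasDerivWithinAt (fun t => φ t * φ' t + w t * φ t ^ 2)
      ((φ' x + w x * φ x) ^ 2 + (C - q) * φ x ^ 2) s x :=
  ((hφ.mul hφ').add (hw.mul (hφ.pow 2))).congr_deriv (by
    simp only [Pi.pow_apply]
    ring)

theorem hasDerivAt_const_mul_tan_riccati {c α x : ℝ} (hcos : cos (c * (x - α)) ≠ 0) :
    HasDerivAt (fun t => c * tan (c * (t - α))) (c ^ 2 + (c * tan (c * (x - α))) ^ 2) x := by
  have inner : HasDerivAt (fun t => c * (t - α)) (c * 1) x :=
    ((hasDerivAt_id x).sub_const α).const_mul c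
  have sec_sq : 1 / cos (c * (x - α)) ^ 2 = 1 + tan (c * (x - α)) ^ 2 := by
    rw [← inv_one_add_tan_sq hcos, one_div, inv_inv]
  refine (((hasDerivAt_tan hcos).comp x inner).const_mul c).congr_deriv ?_
  rw [sec_sq]
  ring

section Interval

variable {α β : ℝ}

theorem deriv_eq_zero_of_nonneg_of_endpoint_le {f f' : ℝ → ℝ} (hαβ : α < β)
    (hf : ∀ x ∈ Icc α β, HasDerivWithinAt f (f' x) (Icc α β) x)
    (hf' : ∀ x ∈ Icc α β, 0 ≤ f' x) (hle : f β ≤ f α) : ∀ x ∈ Icc α β, f' x = 0 := by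
  have hmono : MonotoneOn f (Icc α β) :=
    monotoneOn_of_hasDerivWithinAt_nonneg (convex_Icc α β)
      (fun x hx => (hf x hx).continuousWithinAt)
      (fun x hx => (hf x (interior_subset hx)).mono interior_subset)
      (fun x hx => hf' x (interior_subset hx))
  have hconst : ∀ x ∈ Icc α β, f x = f α := fun x hx =>
    le_antisymm ((hmono hx (right_mem_Icc.2 hαβ.le) hx.2).trans hle)
      (hmono (left_mem_Icc.2 hαβ.le) hx hx.1)
  intro x hx
  have hzero : HasDerivWithinAt f 0 (Icc α β) x :=
    (hasDerivWithinAt_const x _ (f α)).congr hconst (hconst x hx)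
  exact (uniqueDiffOn_Icc hαβ x hx).eq_deriv _ (hf x hx) hzero

variable {φ φ' q : ℝ → ℝ}

theorem eq_zero_of_riccati_of_potential_lt {w : ℝ → ℝ} {C : ℝ} (hαβ : α < β)
    (hφ : ∀ x ∈ Icc α β, HasDerivWithinAt φ (φ' x) (Icc α β) x)
    (hφ' : ∀ x ∈ Icc α β, HasDerivWithinAt φ' (-(q x * φ x)) (Icc α β) x)
    (hw : ∀ x ∈ Icc α β, HasDerivWithinAt w (C + w x ^ 2) (Icc α β) x)
    (hq : ∀ x ∈ Icc α β, q x < C)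
    (hle : φ β * φ' β + w β * φ β ^ 2 ≤ φ α * φ' α + w α * φ α ^ 2) :
    ∀ x ∈ Icc α β, φ x = 0 := by
  have hterm : ∀ x ∈ Icc α β, 0 ≤ (C - q x) * φ x ^ 2 := fun x hx =>
    mul_nonneg (sub_pos.2 (hq x hx)).le (sq_nonneg _)
  intro x hx
  have hsum : (φ' x + w x * φ x) ^ 2 + (C - q x) * φ x ^ 2 = 0 :=
    deriv_eq_zero_of_nonneg_of_endpoint_le hαβ
      (fun y hy => hasDerivWithinAt_picone (hφ y hy) (hφ' y hy) (hw y hy))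
      (fun y hy => add_nonneg (sq_nonneg _) (hterm y hy)) hle x hx
  have hprod : (C - q x) * φ x ^ 2 = 0 :=
    ((add_eq_zero_iff_of_nonneg (sq_nonneg _) (hterm x hx)).1 hsum).2
  exact sq_eq_zero_iff.1
    ((mul_eq_zero.1 hprod).resolve_left (sub_pos.2 (hq x hx)).ne')

theorem eq_zero_of_neumann_dirichlet_of_potential_le {Q : ℝ} (hαβ : α < β)
    (hφ : ∀ x ∈ Icc α β, HasDerivWithinAt φ (φ' x) (Icc α β) x)
    (hφ' : ∀ x ∈ Icc α β, HasDerivWithinAt φ' (-(q x * φ x)) (Icc α β) x)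
    (hneumann : φ' α = 0) (hdirichlet : φ β = 0)
    (hq : ∀ x ∈ Icc α β, q x ≤ Q) (hQ : Q < (π / (2 * (β - α))) ^ 2) :
    ∀ x ∈ Icc α β, φ x = 0 := by
  have : 0 < β - α := sub_pos.2 hαβ
  obtain ⟨c, hQc, hc⟩ : ∃ c, √Q < c ∧ c < π / (2 * (β - α)) :=
    exists_between ((sqrt_lt' (by positivity)).2 hQ)
  have hc0 : 0 < c := (sqrt_nonneg Q).trans_lt hQc
  have hangle : c * (β - α) < π / 2 := by
    rw [lt_div_iff₀ (by positivity)] at hc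
    linarith
  have hcos : ∀ x ∈ Icc α β, cos (c * (x - α)) ≠ 0 := fun x hx => by
    have hnonneg : 0 ≤ c * (x - α) := mul_nonneg hc0.le (sub_nonneg.2 hx.1)
    have hle : c * (x - α) ≤ c * (β - α) := by gcongr; exact hx.2
    exact (cos_pos_of_mem_Ioo ⟨by linarith [pi_pos], hle.trans_lt hangle⟩).ne'
  exact eq_zero_of_riccati_of_potential_lt hαβ hφ hφ'
    (fun x hx => (hasDerivAt_const_mul_tan_riccati (hcos x hx)).hasDerivWithinAt)
    (fun x hx => (hq x hx).trans_lt ((sqrt_lt' hc0).1 hQc))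
    (by simp [hneumann, hdirichlet])

end Interval

theorem mul_div_le_max_zero_mul_div {K : Type*} [Field K] [LinearOrder K] [IsStrictOrderedRing K]
    {r m M b B : K} (hm : 0 ≤ m) (hmM : m ≤ M) (hB : 0 < B) (hBb : B ≤ b) :
    r * (m / b) ≤ max r 0 * (M / B) :=
  mul_le_mul (le_max_left r 0) (div_le_div₀ (hm.trans hmM) hmM hB hBb)
    (div_nonneg hm (hB.le.trans hBb)) (le_max_right r 0)

theorem stmt_9_general {α β mmax bmin lam : ℝ} {m b φ φ' : ℝ → ℝ} (hαβ : α < β)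
    (hmmax : 0 < mmax) (hbmin : 0 < bmin)
    (hm : ∀ x ∈ Icc α β, 0 ≤ m x ∧ m x ≤ mmax) (hb : ∀ x ∈ Icc α β, bmin ≤ b x)
    (hφ : ∀ x ∈ Icc α β, HasDerivWithinAt φ (φ' x) (Icc α β) x)
    (hφ' : ∀ x ∈ Icc α β, HasDerivWithinAt φ' (-(lam * (m x / b x) * φ x)) (Icc α β) x)
    (hne : ∃ x ∈ Icc α β, φ x ≠ 0) (hneumann : φ' α = 0) (hdirichlet : φ β = 0) :
    π ^ 2 * bmin / (4 * mmax * (β - α) ^ 2) ≤ lam := by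
  have : 0 < β - α := sub_pos.2 hαβ
  by_contra! hlam
  have hQ : max lam 0 * (mmax / bmin) < (π / (2 * (β - α))) ^ 2 := calc
    _ < π ^ 2 * bmin / (4 * mmax * (β - α) ^ 2) * (mmax / bmin) := by
      gcongr
      exact max_lt hlam (by positivity)
    _ = (π / (2 * (β - α))) ^ 2 := by
      field_simp
      norm_num
  obtain ⟨x, hx, hφx⟩ := hne
  exact hφx <| eq_zero_of_neumann_dirichlet_of_potential_le hαβ hφ hφ' hneumann hdirichlet
    (fun y hy => mul_div_le_max_zero_mul_div (hm y hy).1 (hm y hy).2 hbmin (hb y hy)) hQ x hx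

/-- Eigenvalue lower bound for the weighted Sturm–Liouville problem
`φ'' + λ (m/b) φ = 0`, `φ'(0) = 0`, `φ(1) = 0` with `m_min ≤ m ≤ m_max`,
`b_min ≤ b ≤ b_max`: every eigenvalue satisfies `λ ≥ π² b_min/(4 m_max)`. -/
theorem stmt_9 (m b : ℝ → ℝ) (mmin mmax bmin bmax : ℝ)
    (hmc : ContinuousOn m (Icc (0:ℝ) 1)) (hbc : ContinuousOn b (Icc (0:ℝ) 1))
    (hmmin : 0 < mmin) (hbmin : 0 < bmin)
    (hmb : ∀ x ∈ Icc (0:ℝ) 1, mmin ≤ m x ∧ m x ≤ mmax)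
    (hbb : ∀ x ∈ Icc (0:ℝ) 1, bmin ≤ b x ∧ b x ≤ bmax)
    (lam : ℝ)
    (hex : ∃ φ φ' φ'' : ℝ → ℝ,
      (∀ x ∈ Icc (0:ℝ) 1, HasDerivWithinAt φ (φ' x) (Icc (0:ℝ) 1) x) ∧
      (∀ x ∈ Icc (0:ℝ) 1, HasDerivWithinAt φ' (φ'' x) (Icc (0:ℝ) 1) x) ∧
      ContinuousOn φ'' (Icc (0:ℝ) 1) ∧
      (∃ x ∈ Icc (0:ℝ) 1, φ x ≠ 0) ∧
      (∀ x ∈ Icc (0:ℝ) 1, φ'' x + lam * (m x / b x) * φ x = 0) ∧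
      φ' 0 = 0 ∧ φ 1 = 0) :
    lam ≥ π ^ 2 * bmin / (4 * mmax) := by
  obtain ⟨φ, φ', φ'', hφ, hφ', -, hne, hode, hneumann, hdirichlet⟩ := hex
  have hmmax : 0 < mmax :=
    let ⟨hlower, hupper⟩ := hmb 0 unitInterval.zero_mem
    hmmin.trans_le (hlower.trans hupper)
  simpa using stmt_9_general zero_lt_one hmmax hbmin
    (fun x hx => ⟨hmmin.le.trans (hmb x hx).1, (hmb x hx).2⟩) (fun x hx => (hbb x hx).1) hφ
    (fun x hx => (hφ' x hx).congr_deriv (eq_neg_of_add_eq_zero_left (hode x hx)))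
    hne hneumann hdirichlet
end

section
/- Let ε > 0, N > 0 and λ ∈ ℝ with λ ≤ ε². Then there is no twice continuously differentiable function φ : [0,1] → ℝ, not identically zero, satisfying φ''(x) + 2·ε·N·φ'(x) + λ·N²·φ(x) = 0 for all x ∈ [0,1] together with φ'(0) = 0 and φ(1) = 0. -/
open Real Set

/-!
Put `c = εN`. The substitution `ψ = exp (c x) • φ` removes the first-order term, so that
`ψ'' = (c² - λN²) • ψ` with a nonnegative coefficient, and `ψ'(0) = c • ψ(0)`. Hence
`⟪ψ, ψ'⟫' = ‖ψ'‖² + ⟪ψ, ψ''⟫ ≥ 0`, and as `⟪ψ, ψ'⟫` is nonnegative at `0` it is nonnegative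
on all of `[0, 1]`. It is half the derivative of `‖ψ‖²`, which therefore increases to its value `0`
at `1`.
-/

theorem monotoneOn_of_forall_hasDerivWithinAt_nonneg {s : Set ℝ} (hs : Convex ℝ s) {f f' : ℝ → ℝ}
    (hf : ∀ x ∈ s, HasDerivWithinAt f (f' x) s x) (hf' : ∀ x ∈ s, 0 ≤ f' x) :
    MonotoneOn f s :=
  monotoneOn_of_hasDerivWithinAt_nonneg hs (fun x hx => (hf x hx).continuousWithinAt)
    (fun x hx => (hf x (interior_subset hx)).mono interior_subset)
    (fun x hx => hf' x (interior_subset hx))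

section ExponentialSubstitution

variable {F : Type*} [NormedAddCommGroup F] [NormedSpace ℝ F] {s : Set ℝ} {x : ℝ}

theorem hasDerivWithinAt_exp_mul_smul {f : ℝ → F} {f' : F} (c : ℝ)
    (hf : HasDerivWithinAt f f' s x) :
    HasDerivWithinAt (fun t => exp (c * t) • f t) (exp (c * x) • (f' + c • f x)) s x := by
  have hexp : HasDerivWithinAt (fun t => exp (c * t)) (exp (c * x) * c) s x := by
    simpa using ((hasDerivAt_id x).const_mul c).exp.hasDerivWithinAt
  simpa only [smul_add, mul_smul] using hexp.fun_smul hf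

theorem hasDerivWithinAt_exp_mul_smul_deriv_of_ode {φ φ' : ℝ → F} {φ'' : F} {c k : ℝ}
    (hφ : HasDerivWithinAt φ (φ' x) s x) (hφ' : HasDerivWithinAt φ' φ'' s x)
    (hode : φ'' + (2 * c) • φ' x + k • φ x = 0) :
    HasDerivWithinAt (fun t => exp (c * t) • (φ' t + c • φ t))
      ((c ^ 2 - k) • exp (c * x) • φ x) s x := by
  have hcancel : φ'' + c • φ' x + c • (φ' x + c • φ x) = (c ^ 2 - k) • φ x := by
    linear_combination (norm := module) hode
  have hderiv := hasDerivWithinAt_exp_mul_smul c (hφ'.fun_add (hφ.fun_const_smul c))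
  rwa [hcancel, smul_comm] at hderiv

end ExponentialSubstitution

section InnerProductSpace

variable {E : Type*} [NormedAddCommGroup E] [InnerProductSpace ℝ E]

theorem monotoneOn_inner_deriv_of_inner_deriv2_nonneg {s : Set ℝ} (hs : Convex ℝ s)
    {ψ ψ' ψ'' : ℝ → E}
    (hψ : ∀ x ∈ s, HasDerivWithinAt ψ (ψ' x) s x)
    (hψ' : ∀ x ∈ s, HasDerivWithinAt ψ' (ψ'' x) s x)
    (hinner : ∀ x ∈ s, 0 ≤ inner ℝ (ψ x) (ψ'' x)) :
    MonotoneOn (fun x => inner ℝ (ψ x) (ψ' x)) s :=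
  monotoneOn_of_forall_hasDerivWithinAt_nonneg hs
    (fun x hx => (hψ x hx).inner ℝ (hψ' x hx))
    (fun x hx => add_nonneg (hinner x hx) real_inner_self_nonneg)

theorem monotoneOn_norm_sq_of_inner_deriv2_nonneg {a b : ℝ} {ψ ψ' ψ'' : ℝ → E}
    (hψ : ∀ x ∈ Icc a b, HasDerivWithinAt ψ (ψ' x) (Icc a b) x)
    (hψ' : ∀ x ∈ Icc a b, HasDerivWithinAt ψ' (ψ'' x) (Icc a b) x)
    (hinner : ∀ x ∈ Icc a b, 0 ≤ inner ℝ (ψ x) (ψ'' x)) (ha : 0 ≤ inner ℝ (ψ a) (ψ' a)) :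
    MonotoneOn (fun x => ‖ψ x‖ ^ 2) (Icc a b) := by
  refine monotoneOn_of_forall_hasDerivWithinAt_nonneg (convex_Icc a b)
    (fun x hx => (hψ x hx).norm_sq) fun x hx => ?_
  have hle : inner ℝ (ψ a) (ψ' a) ≤ inner ℝ (ψ x) (ψ' x) :=
    monotoneOn_inner_deriv_of_inner_deriv2_nonneg (convex_Icc a b) hψ hψ' hinner
      (left_mem_Icc.2 (hx.1.trans hx.2)) hx hx.1
  exact mul_nonneg zero_le_two (ha.trans hle)

theorem eqOn_zero_of_inner_deriv2_nonneg {a b : ℝ} {ψ ψ' ψ'' : ℝ → E}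
    (hψ : ∀ x ∈ Icc a b, HasDerivWithinAt ψ (ψ' x) (Icc a b) x)
    (hψ' : ∀ x ∈ Icc a b, HasDerivWithinAt ψ' (ψ'' x) (Icc a b) x)
    (hinner : ∀ x ∈ Icc a b, 0 ≤ inner ℝ (ψ x) (ψ'' x)) (ha : 0 ≤ inner ℝ (ψ a) (ψ' a))
    (hb : ψ b = 0) :
    EqOn ψ 0 (Icc a b) := by
  intro x hx
  have hle : ‖ψ x‖ ^ 2 ≤ ‖ψ b‖ ^ 2 :=
    monotoneOn_norm_sq_of_inner_deriv2_nonneg hψ hψ' hinner ha hx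
      (right_mem_Icc.2 (hx.1.trans hx.2)) hx.2
  simpa [hb] using hle

theorem stmt_11_general {a b c : ℝ} {k : ℝ → ℝ} {φ φ' φ'' : ℝ → E}
    (hc : 0 ≤ c) (hk : ∀ x ∈ Icc a b, k x ≤ c ^ 2)
    (hφ : ∀ x ∈ Icc a b, HasDerivWithinAt φ (φ' x) (Icc a b) x)
    (hφ' : ∀ x ∈ Icc a b, HasDerivWithinAt φ' (φ'' x) (Icc a b) x)
    (hode : ∀ x ∈ Icc a b, φ'' x + (2 * c) • φ' x + k x • φ x = 0)
    (ha : φ' a = 0) (hb : φ b = 0) :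
    EqOn φ 0 (Icc a b) := by
  let ψ : ℝ → E := fun x => exp (c * x) • φ x
  let ψ' : ℝ → E := fun x => exp (c * x) • (φ' x + c • φ x)
  have hψ : ∀ x ∈ Icc a b, HasDerivWithinAt ψ (ψ' x) (Icc a b) x :=
    fun x hx => hasDerivWithinAt_exp_mul_smul c (hφ x hx)
  have hψ' : ∀ x ∈ Icc a b, HasDerivWithinAt ψ' ((c ^ 2 - k x) • ψ x) (Icc a b) x :=
    fun x hx => hasDerivWithinAt_exp_mul_smul_deriv_of_ode (hφ x hx) (hφ' x hx) (hode x hx)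
  have hinner : ∀ x ∈ Icc a b, 0 ≤ inner ℝ (ψ x) ((c ^ 2 - k x) • ψ x) := by
    intro x hx
    rw [real_inner_smul_right]
    exact mul_nonneg (sub_nonneg.2 (hk x hx)) real_inner_self_nonneg
  have hψa : ψ' a = c • ψ a := by
    simp only [ψ, ψ', ha, zero_add, smul_comm c]
  have hinner_left : 0 ≤ inner ℝ (ψ a) (ψ' a) := by
    rw [hψa, real_inner_smul_right]
    exact mul_nonneg hc real_inner_self_nonneg
  have hψb : ψ b = 0 := by simp only [ψ, hb, smul_zero]
  have hψ_zero : EqOn ψ 0 (Icc a b) :=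
    eqOn_zero_of_inner_deriv2_nonneg hψ hψ' hinner hinner_left hψb
  exact fun x hx => (smul_eq_zero.1 (hψ_zero hx)).resolve_left (exp_ne_zero _)

end InnerProductSpace

/-- The boundary value problem `φ'' + 2εN φ' + λN² φ = 0`, `φ'(0) = 0`, `φ(1) = 0`
(from equally asymmetric position and velocity feedback) has no eigenvalue `λ ≤ ε²`. -/
theorem stmt_11 (ε N lam : ℝ) (hε : 0 < ε) (hN : 0 < N) (hlam : lam ≤ ε ^ 2) :
    ¬ ∃ φ φ' φ'' : ℝ → ℝ,
      (∀ x ∈ Icc (0:ℝ) 1, HasDerivWithinAt φ (φ' x) (Icc (0:ℝ) 1) x) ∧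
      (∀ x ∈ Icc (0:ℝ) 1, HasDerivWithinAt φ' (φ'' x) (Icc (0:ℝ) 1) x) ∧
      ContinuousOn φ'' (Icc (0:ℝ) 1) ∧
      (∃ x ∈ Icc (0:ℝ) 1, φ x ≠ 0) ∧
      (∀ x ∈ Icc (0:ℝ) 1, φ'' x + 2 * ε * N * φ' x + lam * N ^ 2 * φ x = 0) ∧
      φ' 0 = 0 ∧ φ 1 = 0 := by
  rintro ⟨φ, φ', φ'', hφ, hφ', -, ⟨x, hx, hne⟩, hode, h0, h1⟩
  have hk : lam * N ^ 2 ≤ (ε * N) ^ 2 := by rw [mul_pow]; gcongr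
  exact hne (stmt_11_general (c := ε * N) (k := fun _ => lam * N ^ 2) (by positivity)
    (fun _ _ => hk) hφ hφ' (by simpa only [smul_eq_mul, mul_assoc] using hode) h0 h1 hx)
end

section
/- Let ε > 0, N > 0 and λ > ε², and set a := N·√(λ − ε²). There exists a twice continuously differentiable function φ : [0,1] → ℝ, not identically zero, satisfying φ''(x) + 2·ε·N·φ'(x) + λ·N²·φ(x) = 0 for all x ∈ [0,1], φ'(0) = 0 and φ(1) = 0, if and only if ε·N·sin(a) + a·cos(a) = 0. -/
open Real Set

/-!
Multiplying `φ` by `exp (k x)` turns `φ'' + 2 k φ' + (k² + a²) φ = 0` into `u'' + a² u = 0`. The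
Wronskian of `u` with the solution `t ↦ sin (a (x - t))` is constant; comparing its values at
`t = x` and `t = 0` expresses `u x` through `u 0` and `u' 0`. The Neumann condition reads
`u' 0 = k * u 0`, so `a * u x = u 0 * (k * sin (a x) + a * cos (a x))`, and a nontrivial solution
vanishes at the right endpoint exactly when the second factor does.
-/

/-- `φ` solves `φ'' + b φ' + c φ = 0` on `s`. The functions `φ'` and `φ''` are the first and second
derivatives of `φ` relative to `s`, hence one-sided at the endpoints of an interval. -/
structure IsSolutionOn (b c : ℝ) (s : Set ℝ) (φ φ' φ'' : ℝ → ℝ) : Prop where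
  hasDerivWithinAt : ∀ x ∈ s, HasDerivWithinAt φ (φ' x) s x
  hasDerivWithinAt_deriv : ∀ x ∈ s, HasDerivWithinAt φ' (φ'' x) s x
  equation : ∀ x ∈ s, φ'' x + b * φ' x + c * φ x = 0

theorem hasDerivAt_exp_const_mul (k x : ℝ) :
    HasDerivAt (fun t => exp (k * t)) (k * exp (k * x)) x := by
  simpa [mul_comm] using ((hasDerivAt_id x).const_mul k).exp

theorem hasDerivAt_cos_add_sin (A B a x : ℝ) :
    HasDerivAt (fun t => A * cos (a * t) + B * sin (a * t))
      (a * B * cos (a * x) + -(a * A) * sin (a * x)) x := by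
  have linear : HasDerivAt (fun t => a * t) a x := by simpa using (hasDerivAt_id x).const_mul a
  exact ((linear.cos.const_mul A).add (linear.sin.const_mul B)).congr_deriv (by ring)

namespace IsSolutionOn

section

variable {b c : ℝ} {s : Set ℝ} {φ φ' φ'' ψ ψ' ψ'' : ℝ → ℝ}

theorem continuousOn_second_deriv (h : IsSolutionOn b c s φ φ' φ'') : ContinuousOn φ'' s := by
  have hφ : ContinuousOn φ s := fun x hx => (h.hasDerivWithinAt x hx).continuousWithinAt
  have hφ' : ContinuousOn φ' s := fun x hx => (h.hasDerivWithinAt_deriv x hx).continuousWithinAt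
  have rhs : ContinuousOn (fun x => -(b * φ' x + c * φ x)) s := by fun_prop
  exact rhs.congr fun x hx => by linear_combination h.equation x hx

theorem exp_mul (h : IsSolutionOn b c s φ φ' φ'') (k : ℝ) :
    IsSolutionOn (b - 2 * k) (c - k * b + k ^ 2) s
      (fun x => exp (k * x) * φ x)
      (fun x => exp (k * x) * (φ' x + k * φ x))
      (fun x => exp (k * x) * (φ'' x + 2 * k * φ' x + k ^ 2 * φ x)) where
  hasDerivWithinAt x hx :=
    ((hasDerivAt_exp_const_mul k x).hasDerivWithinAt.mul (h.hasDerivWithinAt x hx)).congr_deriv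
      (by ring)
  hasDerivWithinAt_deriv x hx :=
    ((hasDerivAt_exp_const_mul k x).hasDerivWithinAt.mul
      ((h.hasDerivWithinAt_deriv x hx).add ((h.hasDerivWithinAt x hx).const_mul k))).congr_deriv
      (by simp only [Pi.add_apply]; ring)
  equation x hx := by linear_combination exp (k * x) * h.equation x hx

theorem exp_mul_wronskian_eq (hφ : IsSolutionOn b c s φ φ' φ'') (hψ : IsSolutionOn b c s ψ ψ' ψ'')
    (hs : Convex ℝ s) {x y : ℝ} (hx : x ∈ s) (hy : y ∈ s) :
    exp (b * x) * (φ x * ψ' x - φ' x * ψ x) = exp (b * y) * (φ y * ψ' y - φ' y * ψ y) := by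
  have deriv_zero : ∀ t ∈ s, HasDerivWithinAt
      (fun t => exp (b * t) * (φ t * ψ' t - φ' t * ψ t)) 0 s t := fun t ht =>
    ((hasDerivAt_exp_const_mul b t).hasDerivWithinAt.mul
      (((hφ.hasDerivWithinAt t ht).mul (hψ.hasDerivWithinAt_deriv t ht)).sub
        ((hφ.hasDerivWithinAt_deriv t ht).mul (hψ.hasDerivWithinAt t ht)))).congr_deriv (by
      simp only [Pi.sub_apply, Pi.mul_apply]
      linear_combination exp (b * t) * (φ t * hψ.equation t ht - ψ t * hφ.equation t ht))
  have bound := hs.norm_image_sub_le_of_norm_hasDerivWithin_le (C := 0) deriv_zero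
    (fun _ _ => norm_zero.le) hy hx
  rwa [zero_mul, norm_le_zero_iff, sub_eq_zero] at bound

end

theorem cos_add_sin (A B a : ℝ) (s : Set ℝ) :
    IsSolutionOn 0 (a ^ 2) s
      (fun x => A * cos (a * x) + B * sin (a * x))
      (fun x => a * B * cos (a * x) + -(a * A) * sin (a * x))
      (fun x => a * -(a * A) * cos (a * x) + -(a * (a * B)) * sin (a * x)) where
  hasDerivWithinAt x _ := (hasDerivAt_cos_add_sin A B a x).hasDerivWithinAt
  hasDerivWithinAt_deriv x _ := (hasDerivAt_cos_add_sin (a * B) (-(a * A)) a x).hasDerivWithinAt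
  equation x _ := by ring

theorem exists_exp_mul_cos_add_sin (A B k a : ℝ) (s : Set ℝ) :
    ∃ φ' φ'' : ℝ → ℝ, φ' 0 = a * B - k * A ∧ IsSolutionOn (2 * k) (k ^ 2 + a ^ 2) s
      (fun x => exp (-k * x) * (A * cos (a * x) + B * sin (a * x))) φ' φ'' := by
  have shifted := (cos_add_sin A B a s).exp_mul (-k)
  rw [show 0 - 2 * -k = 2 * k by ring,
    show a ^ 2 - -k * 0 + (-k) ^ 2 = k ^ 2 + a ^ 2 by ring] at shifted
  exact ⟨_, _, by simp [sub_eq_add_neg], shifted⟩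

section

variable {k a : ℝ} {s : Set ℝ}

theorem const_mul_eq_cos_add_sin {u u' u'' : ℝ → ℝ} (h : IsSolutionOn 0 (a ^ 2) s u u' u'')
    (hs : Convex ℝ s) {x₀ x : ℝ} (hx₀ : x₀ ∈ s) (hx : x ∈ s) :
    a * u x = a * u x₀ * cos (a * (x - x₀)) + u' x₀ * sin (a * (x - x₀)) := by
  -- With these coefficients the second solution is `t ↦ sin (a * (x - t))`.
  have wronskian := h.exp_mul_wronskian_eq (cos_add_sin (sin (a * x)) (-cos (a * x)) a s) hs hx hx₀
  simp only [zero_mul, exp_zero, one_mul] at wronskian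
  rw [mul_sub, cos_sub, sin_sub]
  linear_combination -wronskian - a * u x * sin_sq_add_cos_sq (a * x)

theorem exp_mul_eq_of_deriv_eq_zero {φ φ' φ'' : ℝ → ℝ}
    (h : IsSolutionOn (2 * k) (k ^ 2 + a ^ 2) s φ φ' φ'') (hs : Convex ℝ s) (h0 : 0 ∈ s)
    (hφ' : φ' 0 = 0) {x : ℝ} (hx : x ∈ s) :
    a * (exp (k * x) * φ x) = φ 0 * (k * sin (a * x) + a * cos (a * x)) := by
  have shifted := h.exp_mul k
  rw [show 2 * k - 2 * k = 0 by ring,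
    show k ^ 2 + a ^ 2 - k * (2 * k) + k ^ 2 = a ^ 2 by ring] at shifted
  have formula := shifted.const_mul_eq_cos_add_sin hs h0 hx
  simp only [mul_zero, exp_zero, one_mul, hφ', sub_zero] at formula
  linear_combination formula

end

end IsSolutionOn

theorem stmt_12_general {k a L : ℝ} (ha : a ≠ 0) (hL : 0 < L) :
    (∃ φ φ' φ'' : ℝ → ℝ,
      (∀ x ∈ Icc 0 L, HasDerivWithinAt φ (φ' x) (Icc 0 L) x) ∧
      (∀ x ∈ Icc 0 L, HasDerivWithinAt φ' (φ'' x) (Icc 0 L) x) ∧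
      ContinuousOn φ'' (Icc 0 L) ∧
      (∃ x ∈ Icc 0 L, φ x ≠ 0) ∧
      (∀ x ∈ Icc 0 L, φ'' x + 2 * k * φ' x + (k ^ 2 + a ^ 2) * φ x = 0) ∧
      φ' 0 = 0 ∧ φ L = 0) ↔
    k * sin (a * L) + a * cos (a * L) = 0 := by
  have zero_mem : 0 ∈ Icc 0 L := left_mem_Icc.2 hL.le
  constructor
  · rintro ⟨φ, φ', φ'', hφ, hφ', -, ⟨z, hz, hφz⟩, hode, neumann, dirichlet⟩
    have formula {x : ℝ} (hx : x ∈ Icc 0 L) :=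
      IsSolutionOn.exp_mul_eq_of_deriv_eq_zero ⟨hφ, hφ', hode⟩ (convex_Icc 0 L) zero_mem neumann hx
    have hφ0 : φ 0 ≠ 0 := by
      intro hφ0
      simpa [hφ0, ha, hφz] using formula hz
    simpa [dirichlet, hφ0] using (formula (right_mem_Icc.2 hL.le)).symm
  · intro characteristic
    obtain ⟨φ', φ'', hφ'0, h⟩ := IsSolutionOn.exists_exp_mul_cos_add_sin a k k a (Icc 0 L)
    refine ⟨_, φ', φ'', h.hasDerivWithinAt, h.hasDerivWithinAt_deriv, h.continuousOn_second_deriv,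
      ⟨0, zero_mem, by simpa using ha⟩, h.equation, by linear_combination hφ'0, ?_⟩
    linear_combination exp (-k * L) * characteristic

/-- For `λ > ε²` and `a = N√(λ-ε²)`, the boundary value problem
`φ'' + 2εN φ' + λN² φ = 0`, `φ'(0) = 0`, `φ(1) = 0` has a nontrivial solution iff
`εN sin(a) + a cos(a) = 0`. -/
theorem stmt_12 (ε N lam : ℝ) (hε : 0 < ε) (hN : 0 < N) (hlam : ε ^ 2 < lam)
    (a : ℝ) (ha : a = N * Real.sqrt (lam - ε ^ 2)) :
    (∃ φ φ' φ'' : ℝ → ℝ,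
      (∀ x ∈ Icc (0:ℝ) 1, HasDerivWithinAt φ (φ' x) (Icc (0:ℝ) 1) x) ∧
      (∀ x ∈ Icc (0:ℝ) 1, HasDerivWithinAt φ' (φ'' x) (Icc (0:ℝ) 1) x) ∧
      ContinuousOn φ'' (Icc (0:ℝ) 1) ∧
      (∃ x ∈ Icc (0:ℝ) 1, φ x ≠ 0) ∧
      (∀ x ∈ Icc (0:ℝ) 1, φ'' x + 2 * ε * N * φ' x + lam * N ^ 2 * φ x = 0) ∧
      φ' 0 = 0 ∧ φ 1 = 0) ↔
    ε * N * Real.sin a + a * Real.cos a = 0 := by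
  have a_ne_zero : a ≠ 0 := ha ▸ (mul_pos hN (sqrt_pos.2 (sub_pos.2 hlam))).ne'
  have stiffness : lam * N ^ 2 = (ε * N) ^ 2 + a ^ 2 := by
    rw [ha, mul_pow N, sq_sqrt (sub_pos.2 hlam).le]
    ring
  rw [stiffness, mul_assoc 2 ε N]
  simpa only [mul_one] using stmt_12_general (k := ε * N) a_ne_zero one_pos
end

section
/- Let c > 0. For every positive integer ℓ there exists exactly one a in the open interval ((2ℓ−1)·π/2, ℓ·π) satisfying c·sin(a) + a·cos(a) = 0. Moreover, every a > 0 satisfying c·sin(a) + a·cos(a) = 0 lies in ((2ℓ−1)·π/2, ℓ·π) for some positive integer ℓ. -/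
open Real Set

/-!
When `sin s = 0`, the equation `c sin a + a cos a = 0` is equivalent to
`a cos (s - a) = c sin (s - a)`. For `c > 0` and `s ≥ π / 2`, the difference of the two sides
increases strictly in `a` on the quarter period `[s - π / 2, s]`, from `-c < 0` to `s > 0`, so it
has exactly one zero inside. On the preceding quarter period `(s - π, s - π / 2]` it is negative
for `a > 0`. Letting `s` run through the positive multiples of `π` locates all positive solutions.
-/

/-- The characteristic function `c sin a + a cos a` rewritten in terms of the distance `s - a` to a
reference point `s`. When `sin s = 0` the two agree up to the factor `cos s = ±1`; the rewriting
makes the monotonicity in `a` to the left of `s` independent of that sign. -/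
noncomputable def shiftedCharFun (c s a : ℝ) : ℝ :=
  a * cos (s - a) - c * sin (s - a)

namespace shiftedCharFun

variable {c s a : ℝ}

lemma eq_cos_mul (hs : sin s = 0) :
    shiftedCharFun c s a = cos s * (c * sin a + a * cos a) := by
  rw [shiftedCharFun, cos_sub, sin_sub, hs]
  ring

lemma eq_zero_iff (hs : sin s = 0) :
    shiftedCharFun c s a = 0 ↔ c * sin a + a * cos a = 0 := by
  have cos_ne_zero : cos s ≠ 0 := by
    rcases sin_eq_zero_iff_cos_eq.mp hs with h | h <;> norm_num [h]
  rw [eq_cos_mul hs, mul_eq_zero, or_iff_right cos_ne_zero]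

@[simp]
lemma apply_self (c s : ℝ) : shiftedCharFun c s s = s := by
  simp [shiftedCharFun]

@[simp]
lemma apply_sub_pi_div_two (c s : ℝ) : shiftedCharFun c s (s - π / 2) = -c := by
  simp [shiftedCharFun]

lemma continuous (c s : ℝ) : Continuous (shiftedCharFun c s) := by
  unfold shiftedCharFun
  fun_prop

lemma strictMonoOn (hc : 0 ≤ c) (hs : π / 2 ≤ s) :
    StrictMonoOn (shiftedCharFun c s) (Icc (s - π / 2) s) := by
  rintro a ⟨ha, -⟩ b ⟨-, hb⟩ hab
  have sin_le : sin (s - b) ≤ sin (s - a) :=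
    sin_le_sin_of_le_of_le_pi_div_two (by linarith [pi_pos]) (by linarith) (by linarith)
  have cos_le : cos (s - a) ≤ cos (s - b) :=
    cos_le_cos_of_nonneg_of_le_pi (by linarith) (by linarith [pi_pos]) (by linarith)
  have cos_pos : 0 < cos (s - b) :=
    cos_pos_of_mem_Ioo ⟨by linarith [pi_pos], by linarith⟩
  have mul_cos_lt : a * cos (s - a) < b * cos (s - b) :=
    calc a * cos (s - a) ≤ a * cos (s - b) := mul_le_mul_of_nonneg_left cos_le (by linarith)
      _ < b * cos (s - b) := mul_lt_mul_of_pos_right hab cos_pos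
  have mul_sin_le : c * sin (s - b) ≤ c * sin (s - a) := mul_le_mul_of_nonneg_left sin_le hc
  unfold shiftedCharFun
  linarith

lemma existsUnique_eq_zero (hc : 0 < c) (hs : π / 2 ≤ s) :
    ∃! a, a ∈ Ioo (s - π / 2) s ∧ shiftedCharFun c s a = 0 := by
  have sign_change :
      0 ∈ Ioo (shiftedCharFun c s (s - π / 2)) (shiftedCharFun c s s) := by
    rw [apply_sub_pi_div_two, apply_self]
    exact ⟨neg_lt_zero.mpr hc, pi_div_two_pos.trans_le hs⟩
  obtain ⟨a, ha, ha_zero⟩ := intermediate_value_Ioo (sub_le_self s pi_div_two_pos.le)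
    (continuous c s).continuousOn sign_change
  refine ⟨a, ⟨ha, ha_zero⟩, fun b ⟨hb, hb_zero⟩ => ?_⟩
  exact (strictMonoOn hc.le hs).injOn (Ioo_subset_Icc_self hb) (Ioo_subset_Icc_self ha)
    (hb_zero.trans ha_zero.symm)

lemma neg_of_mem_Ioc (hc : 0 < c) (ha : 0 ≤ a) (has : a ∈ Ioc (s - π) (s - π / 2)) :
    shiftedCharFun c s a < 0 := by
  obtain ⟨hlt, hle⟩ := has
  have sin_pos : 0 < sin (s - a) :=
    sin_pos_of_pos_of_lt_pi (by linarith [pi_pos]) (by linarith)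
  have cos_nonpos : cos (s - a) ≤ 0 :=
    cos_nonpos_of_pi_div_two_le_of_le (by linarith) (by linarith [pi_pos])
  exact sub_neg.mpr <|
    (mul_nonpos_of_nonneg_of_nonpos ha cos_nonpos).trans_lt (mul_pos hc sin_pos)

lemma mem_Ioo_of_eq_zero (hc : 0 < c) (ha : 0 < a) (has : a ∈ Ioc (s - π) s)
    (h : shiftedCharFun c s a = 0) : a ∈ Ioo (s - π / 2) s := by
  constructor
  · by_contra! hle
    exact (neg_of_mem_Ioc hc ha.le ⟨has.1, hle⟩).ne h
  · refine has.2.lt_of_ne ?_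
    rintro rfl
    exact ha.ne' ((apply_self c a).symm.trans h)

end shiftedCharFun

lemma exists_pos_nat_mem_Ioc_mul {K : Type*} [Field K] [LinearOrder K] [IsStrictOrderedRing K]
    [FloorSemiring K] {p x : K} (hp : 0 < p) (hx : 0 < x) :
    ∃ n : ℕ, 0 < n ∧ x ∈ Ioc (n * p - p) (n * p) := by
  have hxp : 0 < x / p := div_pos hx hp
  refine ⟨⌈x / p⌉₊, Nat.ceil_pos.mpr hxp, ?_, (div_le_iff₀ hp).mp (Nat.le_ceil _)⟩
  rw [← sub_one_mul, ← lt_div_iff₀ hp, sub_lt_iff_lt_add]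
  exact Nat.ceil_lt_add_one hxp.le

/-- For `c > 0`, the transcendental equation `c sin(a) + a cos(a) = 0` has exactly one
solution in each interval `((2ℓ-1)π/2, ℓπ)` for every positive integer `ℓ`, and every
positive solution lies in such an interval. -/
theorem stmt_13 (c : ℝ) (hc : 0 < c) :
    (∀ ℓ : ℕ, 0 < ℓ →
      ∃! a : ℝ, a ∈ Ioo ((2 * (ℓ:ℝ) - 1) * π / 2) ((ℓ:ℝ) * π) ∧
        c * Real.sin a + a * Real.cos a = 0) ∧
    (∀ a : ℝ, 0 < a → c * Real.sin a + a * Real.cos a = 0 →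
      ∃ ℓ : ℕ, 0 < ℓ ∧ a ∈ Ioo ((2 * (ℓ:ℝ) - 1) * π / 2) ((ℓ:ℝ) * π)) := by
  have left_endpoint (ℓ : ℕ) : (2 * (ℓ : ℝ) - 1) * π / 2 = ℓ * π - π / 2 := by ring
  simp only [left_endpoint]
  refine ⟨fun ℓ hℓ => ?_, fun a ha h => ?_⟩
  · have hs : π / 2 ≤ ℓ * π := by
      have : (1 : ℝ) ≤ ℓ := mod_cast hℓ
      nlinarith [pi_pos]
    simpa only [shiftedCharFun.eq_zero_iff (sin_nat_mul_pi ℓ)] using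
      shiftedCharFun.existsUnique_eq_zero hc hs
  · obtain ⟨ℓ, hℓ, haℓ⟩ := exists_pos_nat_mem_Ioc_mul pi_pos ha
    exact ⟨ℓ, hℓ, shiftedCharFun.mem_Ioo_of_eq_zero hc ha haℓ
      ((shiftedCharFun.eq_zero_iff (sin_nat_mul_pi ℓ)).mpr h)⟩
end

section
/- Let b₀, k₀ > 0 and ε ∈ (0,1), and let λ be a real number with λ ≥ ε². Then every complex root s of the quadratic s² + b₀·λ·s + k₀·λ = 0 satisfies Re(s) ≤ −min( b₀·ε²/2, k₀/b₀ ). -/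
open Real

theorem im_eq_zero_or_re_eq_neg_half_of_quadratic_eq_zero {p q : ℝ} {s : ℂ}
    (hs : s ^ 2 + (p : ℂ) * s + (q : ℂ) = 0) : s.im = 0 ∨ s.re = -(p / 2) := by
  have im_mul_eq_zero : s.im * (2 * s.re + p) = 0 := by
    have im_eq := congrArg Complex.im hs
    simp only [pow_two, Complex.add_im, Complex.mul_im, Complex.ofReal_re, Complex.ofReal_im,
      Complex.zero_im] at im_eq
    linarith
  exact (mul_eq_zero.mp im_mul_eq_zero).imp_right fun h ↦ by linarith

theorem le_neg_div_of_sq_add_mul_add_mul_eq_zero {K : Type*} [Field K] [LinearOrder K]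
    [IsStrictOrderedRing K] {b k lam x : K} (hb : 0 < b) (hlam : 0 < lam)
    (hx : x ^ 2 + b * lam * x + k * lam = 0) : x ≤ -(k / b) := by
  have mul_nonpos : lam * (b * x + k) ≤ 0 :=
    calc lam * (b * x + k) = -x ^ 2 := by linear_combination hx
      _ ≤ 0 := neg_nonpos.mpr (sq_nonneg x)
  have linear_nonpos : b * x + k ≤ 0 := nonpos_of_mul_nonpos_right mul_nonpos hlam
  rw [← neg_div, le_div_iff₀ hb]
  linarith

theorem stmt_14_general {b k lam : ℝ} (hb : 0 < b) (hlam : 0 < lam) {s : ℂ}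
    (hs : s ^ 2 + ((b * lam : ℝ) : ℂ) * s + ((k * lam : ℝ) : ℂ) = 0) :
    s.re ≤ -min (b * lam / 2) (k / b) := by
  rcases im_eq_zero_or_re_eq_neg_half_of_quadratic_eq_zero hs with s_real | re_eq
  · lift s to ℝ using s_real
    have root_le : s ≤ -(k / b) :=
      le_neg_div_of_sq_add_mul_add_mul_eq_zero hb hlam (mod_cast hs)
    exact root_le.trans (neg_le_neg (min_le_right _ _))
  · exact re_eq.trans_le (neg_le_neg (min_le_left _ _))

/-- For `λ ≥ ε²`, every complex root of `s² + b₀λs + k₀λ = 0` satisfies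
`Re(s) ≤ -min(b₀ε²/2, k₀/b₀)`. -/
theorem stmt_14 (b₀ k₀ ε lam : ℝ) (hb : 0 < b₀) (hk : 0 < k₀)
    (hε : ε ∈ Set.Ioo (0:ℝ) 1) (hlam : ε ^ 2 ≤ lam)
    (s : ℂ)
    (hs : s ^ 2 + ((b₀ * lam : ℝ) : ℂ) * s + ((k₀ * lam : ℝ) : ℂ) = 0) :
    s.re ≤ -min (b₀ * ε ^ 2 / 2) (k₀ / b₀) :=
  (stmt_14_general hb ((pow_pos hε.1 2).trans_le hlam) hs).trans (by gcongr)
end
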